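/- arXiv:2108.11210 — 2 statements merged into one kernel-verified Lean document; each statement's English description precedes it below -/
import Mathlib

section
/- Let q ≥ 0 and η ∈ ℝ be fixed. Then for every integer N ≥ 1, as β → 0^+, F_q(η,β) − Σ_{n=0}^{N−1} (−1)^n ((−1/2)_n/n!) (β/2)^n F_{q+n}(η) = O(β^N); that is, there exist constants C > 0 and β_0 > 0 such that |F_q(η,β) − Σ_{n=0}^{N−1} (−1)^n ((−1/2)_n/n!) (β/2)^n F_{q+n}(η)| ≤ C β^N for all 0 < β ≤ β_0. -/
open Real MeasureTheory Set Finset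

/-- The relativistic Fermi-Dirac integral. -/
noncomputable def Frel (q η β : ℝ) : ℝ :=
  ∫ x in Ioi (0 : ℝ), x ^ q * Real.sqrt (1 + β * x / 2) / (Real.exp (x - η) + 1)

/-- The standard Fermi-Dirac integral. -/
noncomputable def Fstd (q η : ℝ) : ℝ :=
  ∫ x in Ioi (0 : ℝ), x ^ q / (Real.exp (x - η) + 1)

/-!
For `y ≥ 0` and `N ≥ a`, cutting the binomial series of `(1 + y) ^ a` before its `N`-th term costs
at most the absolute value of that term, even beyond the radius of convergence: up to the factor
`a`, the derivative of the remainder is the remainder with `a` and `N` lowered by one, which leads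
down to `N = 0`, where `0 ≤ (1 + y) ^ a ≤ 1`. With `a = 1 / 2` and `y = β x / 2`, integrate this
inequality against the Fermi-Dirac weight `x ^ q / (exp (x - η) + 1)`, all of whose moments are
finite.
-/

section BinomialRemainder

theorem ringChoose_eq_ascPochhammer_eval_neg (a : ℝ) (n : ℕ) :
    Ring.choose a n = (-1) ^ n * ((ascPochhammer ℝ n).eval (-a) / n.factorial) := by
  have hmulti : (n.factorial : ℝ) * Ring.multichoose (-a) n = (ascPochhammer ℝ n).eval (-a) := by
    rw [← nsmul_eq_mul, Ring.factorial_nsmul_multichoose_eq_ascPochhammer,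
      Polynomial.ascPochhammer_smeval_eq_eval]
  have hneg : Ring.choose a n = (-1) ^ n * Ring.multichoose (-a) n := by
    simpa [Int.negOnePow, Units.smul_def] using Ring.choose_neg' (-a) n
  rw [hneg, ← hmulti, mul_div_cancel_left₀ _ (by positivity)]

theorem succ_mul_ringChoose_succ (a : ℝ) (n : ℕ) :
    (n + 1) * Ring.choose a (n + 1) = a * Ring.choose (a - 1) n := by
  simpa using Ring.choose_smul_choose a (Nat.succ_le_succ n.zero_le)

/-- The remainder of the binomial series: `(1 + y) ^ a` minus the first `N` terms, in which the
generalised binomial coefficients are Mathlib's `Ring.choose a n`. -/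
noncomputable def binomialRemainder (a : ℝ) (N : ℕ) (y : ℝ) : ℝ :=
  (1 + y) ^ a - ∑ n ∈ range N, Ring.choose a n * y ^ n

theorem binomialRemainder_succ_zero (a : ℝ) (N : ℕ) : binomialRemainder a (N + 1) 0 = 0 := by
  simp [binomialRemainder, sum_range_succ']

theorem hasDerivAt_binomialRemainder_succ (a : ℝ) (N : ℕ) {y : ℝ} (hy : 0 < 1 + y) :
    HasDerivAt (binomialRemainder a (N + 1)) (a * binomialRemainder (a - 1) N y) y := by
  have hpow : HasDerivAt (fun y : ℝ ↦ (1 + y) ^ a) (1 * a * (1 + y) ^ (a - 1)) y :=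
    ((hasDerivAt_id y).const_add 1).rpow_const (Or.inl hy.ne')
  have hsum : HasDerivAt (fun y : ℝ ↦ ∑ n ∈ range (N + 1), Ring.choose a n * y ^ n)
      (∑ n ∈ range (N + 1), Ring.choose a n * (n * y ^ (n - 1))) y :=
    HasDerivAt.fun_sum fun n _ ↦ (hasDerivAt_pow n y).const_mul _
  refine (hpow.sub hsum).congr_deriv ?_
  have hshift : ∑ n ∈ range (N + 1), Ring.choose a n * (n * y ^ (n - 1)) =
      a * ∑ n ∈ range N, Ring.choose (a - 1) n * y ^ n := by
    rw [sum_range_succ', mul_sum]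
    simp only [Nat.cast_zero, zero_mul, mul_zero, add_zero, Nat.add_sub_cancel]
    refine sum_congr rfl fun n _ ↦ ?_
    push_cast
    linear_combination y ^ n * succ_mul_ringChoose_succ a n
  rw [hshift, binomialRemainder]
  ring

theorem abs_binomialRemainder_le {a : ℝ} {N : ℕ} (ha : a ≤ N) {y : ℝ} (hy : 0 ≤ y) :
    |binomialRemainder a N y| ≤ |Ring.choose a N| * y ^ N := by
  induction N generalizing a y with
  | zero =>
    have hle : (1 + y) ^ a ≤ 1 :=
      rpow_le_one_of_one_le_of_nonpos (by linarith) (by simpa using ha)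
    simpa [binomialRemainder, abs_of_nonneg (rpow_nonneg (by linarith : 0 ≤ 1 + y) a)] using hle
  | succ N ih =>
    have hderiv {x : ℝ} (hx : 0 ≤ x) := hasDerivAt_binomialRemainder_succ a N
      (by linarith : 0 < 1 + x)
    have hbound_deriv (x : ℝ) : HasDerivAt (fun x ↦ |Ring.choose a (N + 1)| * x ^ (N + 1))
        (|Ring.choose a (N + 1)| * ((N + 1 : ℕ) * x ^ N)) x :=
      (hasDerivAt_pow (N + 1) x).const_mul _
    refine image_norm_le_of_norm_deriv_right_le_deriv_boundary
      (fun x hx ↦ (hderiv hx.1).continuousAt.continuousWithinAt)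
      (fun x hx ↦ (hderiv hx.1).hasDerivWithinAt) (by simp [binomialRemainder_succ_zero])
      hbound_deriv (fun x hx ↦ ?_) (right_mem_Icc.2 hy)
    have ha' : a - 1 ≤ N := by
      push_cast at ha
      linarith
    calc ‖a * binomialRemainder (a - 1) N x‖
        ≤ |a| * (|Ring.choose (a - 1) N| * x ^ N) := by
          rw [norm_mul, norm_eq_abs, norm_eq_abs]
          gcongr
          exact ih ha' hx.1
      _ = |(N + 1) * Ring.choose a (N + 1)| * x ^ N := by
          rw [succ_mul_ringChoose_succ, abs_mul, mul_assoc]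
      _ = |Ring.choose a (N + 1)| * ((N + 1 : ℕ) * x ^ N) := by
          rw [abs_mul, abs_of_nonneg (by positivity)]
          push_cast
          ring

end BinomialRemainder

section MomentExpansion

variable {Ω : Type*} [MeasurableSpace Ω] {μ : Measure Ω} {w f : Ω → ℝ} {a : ℝ} {N : ℕ}

theorem integrable_mul_one_add_rpow (ha : a ≤ N) (hfm : AEMeasurable f μ) (hf : 0 ≤ᵐ[μ] f)
    (hint : ∀ n ≤ N, Integrable (fun x ↦ w x * f x ^ n) μ) :
    Integrable (fun x ↦ w x * (1 + f x) ^ a) μ := by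
  have hw : AEStronglyMeasurable w μ := by simpa using (hint 0 N.zero_le).aestronglyMeasurable
  have hpow : Integrable (fun x ↦ w x * (f x + 1) ^ N) μ := by
    simp only [add_pow, one_pow, mul_one, mul_sum, ← mul_assoc]
    exact integrable_finsetSum _ fun n hn ↦
      (hint n (Nat.lt_succ_iff.1 (mem_range.1 hn))).mul_const _
  refine hpow.mono (hw.mul ((hfm.const_add 1).pow_const a).aestronglyMeasurable) ?_
  filter_upwards [hf] with x hx
  have hone : 1 ≤ 1 + f x := le_add_of_nonneg_right hx
  have hpow_le : (1 + f x) ^ a ≤ (f x + 1) ^ N := by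
    rw [add_comm (f x), ← rpow_natCast]
    exact rpow_le_rpow_of_exponent_le hone ha
  rw [norm_mul, norm_mul, norm_of_nonneg (rpow_nonneg (by linarith) a)]
  gcongr
  exact hpow_le.trans (le_norm_self _)

theorem abs_integral_mul_one_add_rpow_sub_le (ha : a ≤ N) (hfm : AEMeasurable f μ)
    (hf : 0 ≤ᵐ[μ] f) (hint : ∀ n ≤ N, Integrable (fun x ↦ w x * f x ^ n) μ) :
    |∫ x, w x * (1 + f x) ^ a ∂μ - ∑ n ∈ range N, Ring.choose a n * ∫ x, w x * f x ^ n ∂μ| ≤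
      |Ring.choose a N| * ∫ x, |w x| * f x ^ N ∂μ := by
  have hterm : ∀ n ∈ range N, Integrable (fun x ↦ Ring.choose a n * (w x * f x ^ n)) μ :=
    fun n hn ↦ (hint n (mem_range.1 hn).le).const_mul _
  have hremainder : ∫ x, w x * (1 + f x) ^ a ∂μ -
      ∑ n ∈ range N, Ring.choose a n * ∫ x, w x * f x ^ n ∂μ =
        ∫ x, w x * binomialRemainder a N (f x) ∂μ := by
    simp only [← integral_const_mul]
    rw [← integral_finsetSum _ hterm, ← integral_sub (integrable_mul_one_add_rpow ha hfm hf hint)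
      (integrable_finsetSum _ hterm)]
    simp only [binomialRemainder, mul_sub, mul_sum, mul_left_comm]
  have hdom : Integrable (fun x ↦ |w x| * f x ^ N) μ :=
    (hint N le_rfl).abs.congr <| by
      filter_upwards [hf] with x hx
      rw [abs_mul, abs_of_nonneg (pow_nonneg hx N)]
  rw [hremainder, ← norm_eq_abs, ← integral_const_mul]
  refine norm_integral_le_of_norm_le (hdom.const_mul _) ?_
  filter_upwards [hf] with x hx
  rw [norm_mul, norm_eq_abs, norm_eq_abs, mul_left_comm]
  gcongr
  exact abs_binomialRemainder_le ha hx

end MomentExpansion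

section FermiDirac

/-- The Fermi-Dirac weight, i.e. the integrand of `Fstd q η`. -/
noncomputable def fermiDiracWeight (q η x : ℝ) : ℝ :=
  x ^ q / (exp (x - η) + 1)

variable {q η : ℝ}

theorem fermiDiracWeight_nonneg {x : ℝ} (hx : 0 ≤ x) : 0 ≤ fermiDiracWeight q η x := by
  unfold fermiDiracWeight
  positivity

theorem fermiDiracWeight_le_exp_neg_mul_rpow {x : ℝ} (hx : 0 ≤ x) :
    fermiDiracWeight q η x ≤ exp η * (exp (-x) * x ^ q) := by
  calc x ^ q / (exp (x - η) + 1) ≤ x ^ q / exp (x - η) := by gcongr; linarith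
    _ = exp η * (exp (-x) * x ^ q) := by
      rw [div_eq_mul_inv, ← exp_neg, neg_sub, sub_eq_add_neg, exp_add]
      ring

theorem integrableOn_fermiDiracWeight (hq : -1 < q) :
    IntegrableOn (fermiDiracWeight q η) (Ioi 0) := by
  have hGamma : IntegrableOn (fun x ↦ exp (-x) * x ^ q) (Ioi 0) := by
    simpa using GammaIntegral_convergent (s := q + 1) (by linarith)
  refine (hGamma.const_mul (exp η)).mono' ?_ ?_
  · unfold fermiDiracWeight
    exact Measurable.aestronglyMeasurable (by fun_prop)
  · filter_upwards [ae_restrict_mem measurableSet_Ioi] with x hx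
    rw [norm_of_nonneg (fermiDiracWeight_nonneg (le_of_lt hx))]
    exact fermiDiracWeight_le_exp_neg_mul_rpow (le_of_lt hx)

theorem fermiDiracWeight_mul_pow {x : ℝ} (hx : 0 < x) (t : ℝ) (n : ℕ) :
    fermiDiracWeight q η x * (t * x) ^ n = t ^ n * fermiDiracWeight (q + n) η x := by
  rw [fermiDiracWeight, fermiDiracWeight, rpow_add_natCast hx.ne', mul_pow]
  ring

theorem integrableOn_fermiDiracWeight_mul_pow (hq : -1 < q) (t : ℝ) (n : ℕ) :
    IntegrableOn (fun x ↦ fermiDiracWeight q η x * (t * x) ^ n) (Ioi 0) := by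
  have hqn : -1 < q + n := by linarith [n.cast_nonneg (α := ℝ)]
  exact (integrableOn_congr_fun (fun x hx ↦ fermiDiracWeight_mul_pow hx t n)
    measurableSet_Ioi).2 ((integrableOn_fermiDiracWeight hqn).const_mul (t ^ n))

theorem setIntegral_fermiDiracWeight_mul_pow (t : ℝ) (n : ℕ) :
    ∫ x in Ioi 0, fermiDiracWeight q η x * (t * x) ^ n = t ^ n * Fstd (q + n) η := by
  rw [setIntegral_congr_fun measurableSet_Ioi fun x hx ↦ fermiDiracWeight_mul_pow hx t n,
    integral_const_mul]
  rfl

theorem frel_eq_setIntegral_fermiDiracWeight_mul_rpow (β : ℝ) :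
    Frel q η β = ∫ x in Ioi 0, fermiDiracWeight q η x * (1 + β / 2 * x) ^ (1 / 2 : ℝ) := by
  simp only [Frel, fermiDiracWeight, sqrt_eq_rpow, div_mul_eq_mul_div]

end FermiDirac

theorem stmt10_general {q : ℝ} (hq : -1 < q) (η : ℝ) {N : ℕ} (hN : 1 ≤ N) {β : ℝ} (hβ : 0 ≤ β) :
    |Frel q η β - ∑ n ∈ Finset.range N,
        (-1 : ℝ) ^ n * ((ascPochhammer ℝ n).eval (-1 / 2 : ℝ) / n.factorial) *
          (β / 2) ^ n * Fstd (q + n) η| ≤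
      |(-1 : ℝ) ^ N * ((ascPochhammer ℝ N).eval (-1 / 2 : ℝ) / N.factorial)| *
        Fstd (q + N) η * (β / 2) ^ N := by
  have hhalf : (1 / 2 : ℝ) ≤ N := by linarith [(Nat.one_le_cast (α := ℝ)).2 hN]
  have hnonneg : 0 ≤ᵐ[volume.restrict (Ioi 0)] fun x : ℝ ↦ β / 2 * x := by
    filter_upwards [ae_restrict_mem measurableSet_Ioi] with x hx
    exact mul_nonneg (by positivity) (le_of_lt hx)
  have hweight : ∫ x in Ioi 0, |fermiDiracWeight q η x| * (β / 2 * x) ^ N =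
      Fstd (q + N) η * (β / 2) ^ N := by
    rw [mul_comm (Fstd _ _), ← setIntegral_fermiDiracWeight_mul_pow]
    exact setIntegral_congr_fun measurableSet_Ioi fun x hx ↦ by
      simp only [abs_of_nonneg (fermiDiracWeight_nonneg (le_of_lt hx))]
  have hexpansion := abs_integral_mul_one_add_rpow_sub_le hhalf (by fun_prop) hnonneg
    fun n _ ↦ integrableOn_fermiDiracWeight_mul_pow (η := η) hq (β / 2) n
  simpa only [hweight, setIntegral_fermiDiracWeight_mul_pow,
    ← frel_eq_setIntegral_fermiDiracWeight_mul_rpow, ringChoose_eq_ascPochhammer_eval_neg,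
    ← neg_div, ← mul_assoc] using hexpansion

theorem stmt10 (q η : ℝ) (hq : 0 ≤ q) (N : ℕ) (hN : 1 ≤ N) :
    ∃ C > (0 : ℝ), ∃ β₀ > (0 : ℝ), ∀ β : ℝ, 0 < β → β ≤ β₀ →
      |Frel q η β - ∑ n ∈ Finset.range N,
          (-1 : ℝ) ^ n * ((ascPochhammer ℝ n).eval (-1 / 2 : ℝ) / n.factorial) *
            (β / 2) ^ n * Fstd (q + n) η| ≤ C * β ^ N := by
  refine ⟨max _ 1, by positivity, 1, one_pos, fun β hβ _ ↦
    (stmt10_general (by linarith) η hN hβ.le).trans (mul_le_mul (le_max_left _ 1) ?_ ?_ ?_)⟩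
  exacts [by gcongr; exact half_le_self hβ.le, by positivity, by positivity]
end

section
/- Let 0 < c < 1 and η ∈ ℝ. Then (1/2) ∫_{-∞}^∞ e^{η(c+it)} / sin(π(c+it)) dt = 1/(e^{−η}+1). -/
open Real MeasureTheory Complex

/-! The integral is an inverse Mellin transform in disguise. Substituting `u = x / (1 + x)` in
Euler's Beta integral shows that `(1 + x)⁻¹` has Mellin transform
`B(s, 1 - s) = Γ(s) Γ(1 - s) = π / sin (π s)` on the strip `0 < re s < 1`. Since
`|sin (π (σ + i t))|` grows like `cosh (π t)`, this transform is integrable along vertical lines, so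
Mellin inversion applies; its value at `x = exp (-η)` is the claimed identity. -/

section Substitution

open Set

lemma hasDerivAt_div_one_add {𝕜 : Type*} [NontriviallyNormedField 𝕜] {x : 𝕜} (hx : 1 + x ≠ 0) :
    HasDerivAt (fun y ↦ y / (1 + y)) ((1 + x) ^ 2)⁻¹ x := by
  simpa using (hasDerivAt_id' x).fun_div ((hasDerivAt_id' x).const_add 1) hx

lemma injOn_div_one_add {K : Type*} [Field K] :
    InjOn (fun x : K ↦ x / (1 + x)) {x | 1 + x ≠ 0} := by
  intro x hx y hy hxy
  rw [div_eq_div_iff hx hy] at hxy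
  linear_combination hxy

lemma image_div_one_add_Ioi {K : Type*} [Field K] [LinearOrder K] [IsStrictOrderedRing K] :
    (fun x : K ↦ x / (1 + x)) '' Ioi 0 = Ioo 0 1 := by
  ext u
  constructor
  · rintro ⟨x, hx : 0 < x, rfl⟩
    exact ⟨by positivity, (div_lt_one (by positivity)).2 (lt_one_add x)⟩
  · rintro ⟨hu0, hu1⟩
    have hu : 0 < 1 - u := sub_pos.2 hu1
    refine ⟨u / (1 - u), div_pos hu0 hu, ?_⟩
    field_simp
    ring

lemma hasDerivWithinAt_div_one_add_Ioi :
    ∀ x ∈ Ioi (0 : ℝ), HasDerivWithinAt (fun y ↦ y / (1 + y)) ((1 + x) ^ 2)⁻¹ (Ioi 0) x :=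
  fun x (hx : 0 < x) ↦ (hasDerivAt_div_one_add (by positivity)).hasDerivWithinAt

lemma injOn_div_one_add_Ioi : InjOn (fun x : ℝ ↦ x / (1 + x)) (Ioi 0) :=
  injOn_div_one_add.mono fun x (hx : 0 < x) ↦ (by positivity : 1 + x ≠ 0)

variable {E : Type*} [NormedAddCommGroup E] [NormedSpace ℝ E]

lemma integrableOn_Ioo_iff_comp_div_one_add (f : ℝ → E) :
    IntegrableOn f (Ioo 0 1) ↔
      IntegrableOn (fun x ↦ ((1 + x) ^ 2)⁻¹ • f (x / (1 + x))) (Ioi 0) := by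
  simpa [← image_div_one_add_Ioi] using integrableOn_image_iff_integrableOn_abs_deriv_smul
    measurableSet_Ioi hasDerivWithinAt_div_one_add_Ioi injOn_div_one_add_Ioi f

lemma integral_Ioo_eq_integral_comp_div_one_add (f : ℝ → E) :
    ∫ u in Ioo 0 1, f u = ∫ x in Ioi 0, ((1 + x) ^ 2)⁻¹ • f (x / (1 + x)) := by
  simpa [← image_div_one_add_Ioi] using integral_image_eq_integral_abs_deriv_smul
    measurableSet_Ioi hasDerivWithinAt_div_one_add_Ioi injOn_div_one_add_Ioi f

end Substitution

section MellinTransform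

lemma betaIntegrand_comp_div_one_add (u v : ℂ) {x : ℝ} (hx : 0 < x) :
    ((1 + x) ^ 2)⁻¹ • (((x / (1 + x) : ℝ) : ℂ) ^ (u - 1) *
        (1 - ((x / (1 + x) : ℝ) : ℂ)) ^ (v - 1)) =
      (x : ℂ) ^ (u - 1) • (1 + x : ℂ) ^ (-(u + v)) := by
  have hx1 : 0 < 1 + x := by positivity
  have hx1' : (1 + x : ℂ) ≠ 0 := by exact_mod_cast hx1.ne'
  have one_sub_eq : (1 - ((x / (1 + x) : ℝ) : ℂ)) = ((1 : ℝ) / (1 + x : ℝ) : ℂ) := by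
    push_cast
    field_simp
    ring
  have exponent_eq : -(u + v) = -(u - 1) - (v - 1) - 2 := by ring
  rw [one_sub_eq, ofReal_div, div_cpow_ofReal_nonneg hx.le hx1.le,
    div_cpow_ofReal_nonneg zero_le_one hx1.le, exponent_eq, cpow_sub _ _ hx1', cpow_sub _ _ hx1',
    cpow_neg, cpow_ofNat, ofReal_one, one_cpow, real_smul, smul_eq_mul]
  push_cast
  ring

lemma hasMellin_one_add_cpow_neg {a s : ℂ} (hs : 0 < s.re) (hsa : s.re < a.re) :
    HasMellin (fun x : ℝ ↦ (1 + x : ℂ) ^ (-a)) s (betaIntegral s (a - s)) := by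
  have integrand_eq : Set.EqOn _ _ (Set.Ioi (0 : ℝ)) :=
    fun x hx ↦ betaIntegrand_comp_div_one_add s (a - s) hx
  simp only [add_sub_cancel] at integrand_eq
  constructor
  · have beta_convergent := betaIntegral_convergent (v := a - s) hs (by simpa using hsa)
    rw [intervalIntegrable_iff_integrableOn_Ioo_of_le zero_le_one,
      integrableOn_Ioo_iff_comp_div_one_add] at beta_convergent
    exact beta_convergent.congr_fun integrand_eq measurableSet_Ioi
  · rw [betaIntegral, intervalIntegral.integral_of_le zero_le_one, integral_Ioc_eq_integral_Ioo,
      integral_Ioo_eq_integral_comp_div_one_add,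
      setIntegral_congr_fun measurableSet_Ioi integrand_eq, mellin]

lemma betaIntegral_one_sub {s : ℂ} (hs0 : 0 < s.re) (hs1 : s.re < 1) :
    betaIntegral s (1 - s) = π / Complex.sin (π * s) := by
  rw [betaIntegral_eq_Gamma_mul_div _ _ hs0 (by simpa using hs1), add_sub_cancel,
    Complex.Gamma_one, div_one, Complex.Gamma_mul_Gamma_one_sub]

lemma hasMellin_inv_one_add {s : ℂ} (hs0 : 0 < s.re) (hs1 : s.re < 1) :
    HasMellin (fun x : ℝ ↦ (1 + x : ℂ)⁻¹) s (π / Complex.sin (π * s)) := by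
  simpa only [cpow_neg_one, betaIntegral_one_sub hs0 hs1] using
    hasMellin_one_add_cpow_neg (a := 1) hs0 hs1

end MellinTransform

section VerticalDecay

lemma abs_sin_re_mul_cosh_im_le_norm_sin (z : ℂ) :
    |Real.sin z.re| * Real.cosh z.im ≤ ‖Complex.sin z‖ := by
  have re_sin : (Complex.sin z).re = Real.sin z.re * Real.cosh z.im := by
    rw [Complex.sin_eq]
    simp [sin_ofReal_re, cosh_ofReal_re]
  simpa only [re_sin, abs_mul, abs_of_pos (Real.cosh_pos _)] using
    Complex.abs_re_le_norm (Complex.sin z)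

lemma one_add_sq_div_two_le_cosh (x : ℝ) : 1 + x ^ 2 / 2 ≤ Real.cosh x := by
  simpa [Finset.sum_range_succ] using sum_le_hasSum (Finset.range 2)
    (fun n _ ↦ div_nonneg ((even_two_mul n).pow_nonneg x) (by positivity)) (Real.hasSum_cosh x)

lemma integrable_inv_cosh : Integrable fun x : ℝ ↦ (Real.cosh x)⁻¹ := by
  refine (integrable_inv_one_add_sq.const_mul 2).mono'
    (Real.continuous_cosh.inv₀ fun x ↦ (Real.cosh_pos x).ne').aestronglyMeasurable
    (.of_forall fun x ↦ ?_)
  have hcosh := Real.cosh_pos x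
  rw [Real.norm_of_nonneg (by positivity), ← div_eq_mul_inv, inv_eq_one_div,
    div_le_div_iff₀ hcosh (by positivity), one_mul]
  linarith [one_add_sq_div_two_le_cosh x]

lemma verticalIntegrable_inv_sin {σ : ℝ} (hσ : Real.sin σ ≠ 0) :
    VerticalIntegrable (fun z ↦ (Complex.sin z)⁻¹) σ := by
  refine (integrable_inv_cosh.const_mul |Real.sin σ|⁻¹).mono'
    (Measurable.aestronglyMeasurable (by fun_prop)) (.of_forall fun t ↦ ?_)
  have hpos : 0 < |Real.sin σ| * Real.cosh t := mul_pos (abs_pos.2 hσ) (Real.cosh_pos t)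
  rw [norm_inv, ← mul_inv]
  refine inv_anti₀ hpos ?_
  simpa using abs_sin_re_mul_cosh_im_le_norm_sin (σ + t * I)

lemma verticalIntegrable_pi_div_sin {σ : ℝ} (hσ : Real.sin (π * σ) ≠ 0) :
    VerticalIntegrable (fun s ↦ π / Complex.sin (π * s)) σ := by
  have h := ((verticalIntegrable_inv_sin hσ).comp_mul_left' pi_ne_zero).const_mul (π : ℂ)
  refine h.congr (.of_forall fun t ↦ ?_)
  push_cast
  ring_nf

end VerticalDecay

lemma mellinInv_pi_div_sin {σ x : ℝ} (hσ0 : 0 < σ) (hσ1 : σ < 1) (hx : 0 < x) :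
    mellinInv σ (fun s ↦ π / Complex.sin (π * s)) x = (1 + x : ℂ)⁻¹ := by
  have mellin_eq (t : ℝ) : mellin (fun y : ℝ ↦ (1 + y : ℂ)⁻¹) (σ + t * I) =
      π / Complex.sin (π * (σ + t * I)) :=
    (hasMellin_inv_one_add (by simpa using hσ0) (by simpa using hσ1)).2
  have sin_ne_zero : Real.sin (π * σ) ≠ 0 :=
    (Real.sin_pos_of_pos_of_lt_pi (by positivity) (mul_lt_of_lt_one_right pi_pos hσ1)).ne'
  have vertical : VerticalIntegrable (mellin fun y : ℝ ↦ (1 + y : ℂ)⁻¹) σ := by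
    simpa only [VerticalIntegrable, mellin_eq] using verticalIntegrable_pi_div_sin sin_ne_zero
  have convergent : MellinConvergent (fun y : ℝ ↦ (1 + y : ℂ)⁻¹) σ :=
    (hasMellin_inv_one_add (by simpa using hσ0) (by simpa using hσ1)).1
  have continuousAt_inv : ContinuousAt (fun y : ℝ ↦ (1 + y : ℂ)⁻¹) x :=
    ContinuousAt.inv₀ (by fun_prop) (by exact_mod_cast (by positivity : 1 + x ≠ 0))
  have inversion := mellinInv_mellin_eq σ _ hx convergent vertical continuousAt_inv
  simpa only [mellinInv, mellin_eq] using inversion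

lemma ofReal_exp_cpow (x : ℝ) (s : ℂ) : (Real.exp x : ℂ) ^ s = Complex.exp (x * s) := by
  rw [cpow_def_of_ne_zero (by exact_mod_cast Real.exp_ne_zero x), ← ofReal_log (Real.exp_nonneg x),
    Real.log_exp]

theorem stmt15 (c η : ℝ) (hc0 : 0 < c) (hc1 : c < 1) :
    (1 / 2 : ℂ) * ∫ t : ℝ, Complex.exp ((η : ℂ) * ((c : ℂ) + t * Complex.I)) /
        Complex.sin ((π : ℂ) * ((c : ℂ) + t * Complex.I)) =
      ((1 / (Real.exp (-η) + 1) : ℝ) : ℂ) := by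
  have integrand_eq (t : ℝ) :
      (Real.exp (-η) : ℂ) ^ (-((c : ℂ) + t * I)) • (π / Complex.sin (π * (c + t * I))) =
        π * (Complex.exp (η * (c + t * I)) / Complex.sin (π * (c + t * I))) := by
    rw [ofReal_exp_cpow, ofReal_neg, neg_mul_neg, smul_eq_mul, mul_div_left_comm]
  have inversion := mellinInv_pi_div_sin hc0 hc1 (Real.exp_pos (-η))
  simp only [mellinInv, integrand_eq, integral_const_mul, real_smul] at inversion
  rw [ofReal_div, ofReal_one, ofReal_add, add_comm, ofReal_one, one_div (1 + _), ← inversion,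
    ← mul_assoc]
  congr 1
  push_cast
  field_simp
end
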